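/- Let M be the 27 × 27 integer matrix obtained by stacking vertically the three Kronecker products r ⊗ I₃ ⊗ I₃, I₃ ⊗ r ⊗ I₃, and I₃ ⊗ I₃ ⊗ r, where I₃ is the 3 × 3 identity matrix and r = (1, 1, 1). Let x_p = (0,1,0,1,50,1,0,1,1,0,52,0,52,2706,53,0,53,52,0,1,1,1,105,0,1,0,1) ∈ ℤ²⁷. Then the set of vectors x ∈ ℤ²⁷ with all coordinates nonnegative satisfying M x = M x_p, x₂₇ = 1, and x₉ = 1 has exactly 9 elements. -/

import Mathlib

open Matrix Kronecker

/-- The 1 × 3 all-ones row vector `r = (1, 1, 1)`. -/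
def rOnes : Matrix (Fin 1) (Fin 3) ℤ := Matrix.of fun _ _ => 1

/-- Lexicographic identification of index triples `(i₁, i₂, i₃)` with `Fin 27`
(first coordinate most significant), matching the lexicographic ordering of the triples
`(i₁, i₂, i₃) ∈ {1, 2, 3}³` used to index the 27 coordinates. -/
def colEquiv : (Fin 3 × Fin 3) × Fin 3 ≃ Fin 27 :=
  (Equiv.prodCongr finProdFinEquiv (Equiv.refl (Fin 3))).trans finProdFinEquiv

def rowEquiv1 : (Fin 1 × Fin 3) × Fin 3 ≃ Fin 9 :=
  (Equiv.prodCongr finProdFinEquiv (Equiv.refl (Fin 3))).trans finProdFinEquiv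

def rowEquiv2 : (Fin 3 × Fin 1) × Fin 3 ≃ Fin 9 :=
  (Equiv.prodCongr finProdFinEquiv (Equiv.refl (Fin 3))).trans finProdFinEquiv

def rowEquiv3 : (Fin 3 × Fin 3) × Fin 1 ≃ Fin 9 :=
  (Equiv.prodCongr finProdFinEquiv (Equiv.refl (Fin 1))).trans finProdFinEquiv

/-- The 27 × 27 matrix obtained by stacking vertically the three Kronecker products
`r ⊗ I₃ ⊗ I₃`, `I₃ ⊗ r ⊗ I₃` and `I₃ ⊗ I₃ ⊗ r`, where `I₃` is the 3 × 3 identity matrix and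
`r = (1, 1, 1)` is the 1 × 3 all-ones row, with columns indexed lexicographically by triples. -/
def M : Matrix (Fin 27) (Fin 27) ℤ :=
  Matrix.reindex
    ((rowEquiv1.sumCongr (rowEquiv2.sumCongr rowEquiv3)).trans
      (((Equiv.refl (Fin 9)).sumCongr finSumFinEquiv).trans finSumFinEquiv))
    colEquiv
    (Matrix.fromRows
      (rOnes ⊗ₖ (1 : Matrix (Fin 3) (Fin 3) ℤ) ⊗ₖ (1 : Matrix (Fin 3) (Fin 3) ℤ))
      (Matrix.fromRows
        ((1 : Matrix (Fin 3) (Fin 3) ℤ) ⊗ₖ rOnes ⊗ₖ (1 : Matrix (Fin 3) (Fin 3) ℤ))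
        ((1 : Matrix (Fin 3) (Fin 3) ℤ) ⊗ₖ (1 : Matrix (Fin 3) (Fin 3) ℤ) ⊗ₖ rOnes)))

/-- The particular solution of block 322 (coordinates indexed lexicographically by triples,
coordinate 27 corresponding to (3,3,3)). -/
def xp : Fin 27 → ℤ := ![0,1,0,1,50,1,0,1,1,0,52,0,52,2706,53,0,53,52,0,1,1,1,105,0,1,0,1]

/-!
`M x = M y` says that `x` and `y`, read as `3 × 3 × 3` arrays, have the same sums along all
axis-parallel lines, and such an array is determined by its eight corners. For a solution `x`, the
line `x_{•11}` sums to `0`, so it vanishes, while the lines `u = x_{•13}` and `v = x_{•31}` are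
nonnegative with sum `1`, so each of them is one of the three standard basis vectors. With `x₁₃₃`
and `x₃₃₃` prescribed, `u` and `v` determine all corners, and each of the `3 · 3` choices of
`(u, v)` extends to a nonnegative solution.
-/

section Kronecker

variable {l m n R : Type*} [Fintype m] [Fintype n] [DecidableEq n] [NonAssocSemiring R]

lemma kronecker_one_mulVec (A : Matrix l m R) (v : m × n → R) (i : l) (j : n) :
    ((A ⊗ₖ (1 : Matrix n n R)) *ᵥ v) (i, j) = (A *ᵥ fun i' ↦ v (i', j)) i := by
  simp [mulVec, dotProduct, Fintype.sum_prod_type, one_apply]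

lemma one_kronecker_mulVec (A : Matrix l m R) (v : n × m → R) (j : n) (i : l) :
    (((1 : Matrix n n R) ⊗ₖ A) *ᵥ v) (j, i) = (A *ᵥ fun i' ↦ v (j, i')) i := by
  simp [mulVec, dotProduct, Fintype.sum_prod_type_right, one_apply]

end Kronecker

section LineSums

variable {ι κ τ A : Type*} [Fintype ι] [Fintype κ] [Fintype τ]

/-- The sums of a three-dimensional array along its axis-parallel lines, in the first, second and
third direction. A line is indexed by the two coordinates that are constant along it. -/
def lineSums [AddCommMonoid A] (f : (ι × κ) × τ → A) :
    (κ × τ → A) × (ι × τ → A) × (ι × κ → A) :=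
  (fun p ↦ ∑ i, f ((i, p.1), p.2), fun p ↦ ∑ j, f ((p.1, j), p.2), fun p ↦ ∑ k, f (p, k))

lemma lineSums_eq_iff [AddCommMonoid A] {f g : (ι × κ) × τ → A} :
    lineSums f = lineSums g ↔
      (∀ j k, ∑ i, f ((i, j), k) = ∑ i, g ((i, j), k)) ∧
      (∀ i k, ∑ j, f ((i, j), k) = ∑ j, g ((i, j), k)) ∧
      ∀ i j, ∑ k, f ((i, j), k) = ∑ k, g ((i, j), k) := by
  simp [lineSums, funext_iff]

variable [AddCancelCommMonoid A]

lemma eq_of_sum_eq_of_forall_ne {f g : ι → A} (i₀ : ι) (hsum : ∑ i, f i = ∑ i, g i)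
    (h : ∀ i ≠ i₀, f i = g i) (i : ι) : f i = g i := by
  classical
  obtain rfl | hi := eq_or_ne i i₀
  · have hrest : ∑ j ∈ {i}ᶜ, f j = ∑ j ∈ {i}ᶜ, g j :=
      Finset.sum_congr rfl fun j hj ↦ h j (by simpa using hj)
    rw [Fintype.sum_eq_add_sum_compl i f, Fintype.sum_eq_add_sum_compl i g, hrest] at hsum
    exact add_right_cancel hsum
  · exact h i hi

lemma eq_of_lineSums_eq_of_forall_ne {f g : (ι × κ) × τ → A} (i₀ : ι) (j₀ : κ) (k₀ : τ)
    (hfg : lineSums f = lineSums g)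
    (h : ∀ i ≠ i₀, ∀ j ≠ j₀, ∀ k ≠ k₀, f ((i, j), k) = g ((i, j), k)) : f = g := by
  obtain ⟨h₁, h₂, h₃⟩ := lineSums_eq_iff.1 hfg
  have hplane : ∀ i ≠ i₀, ∀ j ≠ j₀, ∀ k, f ((i, j), k) = g ((i, j), k) := fun i hi j hj ↦
    eq_of_sum_eq_of_forall_ne k₀ (h₃ i j) (h i hi j hj)
  have hslice : ∀ i ≠ i₀, ∀ j k, f ((i, j), k) = g ((i, j), k) := fun i hi j k ↦
    eq_of_sum_eq_of_forall_ne j₀ (h₂ i k) (fun j hj ↦ hplane i hi j hj k) j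
  ext ⟨⟨i, j⟩, k⟩
  exact eq_of_sum_eq_of_forall_ne i₀ (h₁ j k) (fun i hi ↦ hslice i hi j k) i

end LineSums

lemma rOnes_mulVec (v : Fin 3 → ℤ) (a : Fin 1) : (rOnes *ᵥ v) a = ∑ i, v i := by
  simp [rOnes, mulVec, dotProduct]

lemma M_mulVec_eq_iff {x y : Fin 27 → ℤ} :
    M *ᵥ x = M *ᵥ y ↔ lineSums (x ∘ colEquiv) = lineSums (y ∘ colEquiv) := by
  rw [M, reindex_apply, submatrix_mulVec_equiv, submatrix_mulVec_equiv, Equiv.symm_symm,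
    (Equiv.surjective _).injective_comp_right.eq_iff, lineSums_eq_iff]
  simp [fromRows_mulVec, funext_iff, kronecker_one_mulVec, one_kronecker_mulVec, rOnes_mulVec]

section Simplex

variable {ι : Type*} [Fintype ι]

lemma stdSimplex_int_eq_range_single [DecidableEq ι] :
    stdSimplex ℤ ι = Set.range fun i ↦ Pi.single i 1 := by
  refine Set.Subset.antisymm ?_ (Set.range_subset_iff.2 (single_mem_stdSimplex ℤ))
  rintro u ⟨hu, hsum⟩
  obtain ⟨s, -, hs⟩ : ∃ s ∈ Finset.univ, u s ≠ 0 :=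
    Finset.exists_ne_zero_of_sum_ne_zero (by simp [hsum])
  have hle : Pi.single s 1 ≤ u := by
    have hs₁ : 1 ≤ u s := (hu s).lt_of_ne' hs
    exact update_le_iff.2 ⟨hs₁, fun i _ ↦ hu i⟩
  have heq := (Finset.sum_eq_sum_iff_of_le fun i (_ : i ∈ Finset.univ) ↦ hle i).1 (by simp [hsum])
  exact ⟨s, funext fun i ↦ heq i (Finset.mem_univ i)⟩

lemma ncard_stdSimplex_int : (stdSimplex ℤ ι).ncard = Fintype.card ι := by
  classical
  rw [stdSimplex_int_eq_range_single, Set.ncard_range_of_injective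
    (Pi.linearIndependent_single_one ι ℤ).injective, Nat.card_eq_fintype_card]

end Simplex

section Layer

variable {G : Type*} [AddCommGroup G]

/-- The `3 × 3` matrix with row sums and column sums `p`, `p + r + q`, `q + s` and with corners
`0`, `a`, `b`, `s`; the layers `x_{i••}` of the solutions have this form. -/
def blockLayer (p q r s a b : G) : Matrix (Fin 3) (Fin 3) G :=
  !![0,     p - a,     a;
     p - b, r + a + b, q - a;
     b,     q - b,     s]

lemma sum_blockLayer_row (p q r s a b : G) (j : Fin 3) :
    ∑ k, blockLayer p q r s a b j k = ![p, p + r + q, q + s] j := by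
  fin_cases j
  · simp [blockLayer, Fin.sum_univ_three]
  · have hcancel : p - b + (r + a + b) + (q - a) = p + r + q := by abel
    simpa [blockLayer, Fin.sum_univ_three] using hcancel
  · simp [blockLayer, Fin.sum_univ_three]

lemma blockLayer_transpose (p q r s a b : G) :
    (blockLayer p q r s a b)ᵀ = blockLayer p q r s b a := by
  ext j k
  fin_cases j <;> fin_cases k <;> simp [blockLayer, add_right_comm]

lemma sum_blockLayer_col (p q r s a b : G) (k : Fin 3) :
    ∑ j, blockLayer p q r s a b j k = ![p, p + r + q, q + s] k := by
  rw [← sum_blockLayer_row p q r s b a, ← blockLayer_transpose p q r s a b]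
  rfl

lemma blockLayer_nonneg [PartialOrder G] [IsOrderedAddMonoid G] {p q r s a b : G} (hr : 0 ≤ r)
    (hs : 0 ≤ s) (ha : 0 ≤ a) (hb : 0 ≤ b) (hap : a ≤ p) (hbp : b ≤ p) (haq : a ≤ q) (hbq : b ≤ q)
    (j k : Fin 3) : 0 ≤ blockLayer p q r s a b j k := by
  fin_cases j <;> fin_cases k <;> simp [blockLayer, add_nonneg, *]

end Layer

/-- The array of a solution `x` of block 322, in terms of its lines `u = x_{•13}` and
`v = x_{•31}`. -/
def blockArray (u v : Fin 3 → ℤ) : (Fin 3 × Fin 3) × Fin 3 → ℤ := fun ((i, j), k) ↦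
  blockLayer (![1, 52, 2] i) (![1, 53, 1] i) (![50, 2706, 103] i) (![1, 52, 1] i) (u i) (v i) j k

lemma blockArray_injective2 : Function.Injective2 blockArray := fun _ _ _ _ h ↦
  ⟨funext fun i ↦ congrFun h ((i, 0), 2), funext fun i ↦ congrFun h ((i, 2), 0)⟩

lemma lineSums_blockArray {u v u' v' : Fin 3 → ℤ} (hu : ∑ i, u i = ∑ i, u' i)
    (hv : ∑ i, v i = ∑ i, v' i) : lineSums (blockArray u v) = lineSums (blockArray u' v') := by
  refine lineSums_eq_iff.2 ⟨fun j k ↦ ?_, fun i k ↦ ?_, fun i j ↦ ?_⟩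
  · fin_cases j <;> fin_cases k <;>
      simp [blockArray, blockLayer, Finset.sum_add_distrib, Finset.sum_sub_distrib, hu, hv]
  · exact (sum_blockLayer_col ..).trans (sum_blockLayer_col ..).symm
  · exact (sum_blockLayer_row ..).trans (sum_blockLayer_row ..).symm

lemma blockArray_nonneg {u v : Fin 3 → ℤ} (hu : u ∈ stdSimplex ℤ (Fin 3))
    (hv : v ∈ stdSimplex ℤ (Fin 3)) : 0 ≤ blockArray u v := by
  rintro ⟨⟨i, j⟩, k⟩
  have hu₁ : u i ≤ 1 := (mem_Icc_of_mem_stdSimplex hu i).2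
  have hv₁ : v i ≤ 1 := (mem_Icc_of_mem_stdSimplex hv i).2
  have hp : 1 ≤ ![(1 : ℤ), 52, 2] i := by fin_cases i <;> simp
  have hq : 1 ≤ ![(1 : ℤ), 53, 1] i := by fin_cases i <;> simp
  have hr : 0 ≤ ![(50 : ℤ), 2706, 103] i := by fin_cases i <;> simp
  have hs : 0 ≤ ![(1 : ℤ), 52, 1] i := by fin_cases i <;> simp
  exact blockLayer_nonneg hr hs (hu.1 i) (hv.1 i) (hu₁.trans hp) (hv₁.trans hp) (hu₁.trans hq)
    (hv₁.trans hq) j k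

lemma xp_comp_colEquiv : xp ∘ colEquiv = blockArray (Pi.single 2 1) (Pi.single 2 1) := by
  decide

lemma exists_eq_blockArray {f : (Fin 3 × Fin 3) × Fin 3 → ℤ} (hf : 0 ≤ f)
    (hsums : lineSums f = lineSums (xp ∘ colEquiv)) (h333 : f ((2, 2), 2) = 1)
    (h133 : f ((0, 2), 2) = 1) :
    ∃ u ∈ stdSimplex ℤ (Fin 3), ∃ v ∈ stdSimplex ℤ (Fin 3), blockArray u v = f := by
  have hline := (lineSums_eq_iff.1 hsums).1
  have hu : ∑ i, f ((i, 0), 2) = 1 := hline 0 2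
  have hv : ∑ i, f ((i, 2), 0) = 1 := hline 2 0
  have hzero : ∀ i, f ((i, 0), 0) = 0 := by
    have hsum : ∑ i, f ((i, 0), 0) = 0 := hline 0 0
    simpa using (Finset.sum_eq_zero_iff_of_nonneg fun i _ ↦ hf ((i, 0), 0)).1 hsum
  refine ⟨fun i ↦ f ((i, 0), 2), ⟨fun i ↦ hf _, hu⟩, fun i ↦ f ((i, 2), 0), ⟨fun i ↦ hf _, hv⟩,
    eq_of_lineSums_eq_of_forall_ne 1 1 1 ?_ ?_⟩
  · rw [hsums, xp_comp_colEquiv]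
    exact lineSums_blockArray (by simpa using hu) (by simpa using hv)
  · intro i hi j hj k hk
    fin_cases i <;> fin_cases j <;> fin_cases k <;> simp_all [blockArray, blockLayer]

lemma solutionSet_eq_image_blockArray :
    {x : Fin 27 → ℤ | (∀ i, 0 ≤ x i) ∧ M *ᵥ x = M *ᵥ xp ∧ x 26 = 1 ∧ x 8 = 1} =
      (fun p ↦ blockArray p.1 p.2 ∘ colEquiv.symm) ''
        (stdSimplex ℤ (Fin 3) ×ˢ stdSimplex ℤ (Fin 3)) := by
  ext x
  constructor
  · rintro ⟨hx, hM, h333, h133⟩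
    obtain ⟨u, hu, v, hv, huv⟩ :=
      exists_eq_blockArray (fun _ ↦ hx _) (M_mulVec_eq_iff.1 hM) h333 h133
    exact ⟨(u, v), ⟨hu, hv⟩, (colEquiv.comp_symm_eq _ _).2 huv⟩
  · rintro ⟨⟨u, v⟩, ⟨hu, hv⟩, rfl⟩
    refine ⟨fun _ ↦ blockArray_nonneg hu hv _, M_mulVec_eq_iff.2 ?_, rfl, rfl⟩
    rw [Function.comp_assoc, Equiv.symm_comp_self, Function.comp_id, xp_comp_colEquiv]
    exact lineSums_blockArray (by simpa using hu.2) (by simpa using hv.2)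

/-- The set of nonnegative integer vectors \`x\` with \`M x = M x_p\`, \`x₂₇ = 1\` and \`x₉ = 1\` (block 322) has exactly 9 elements. -/
theorem block322_solution_count :
    {x : Fin 27 → ℤ | (∀ i, 0 ≤ x i) ∧ M.mulVec x = M.mulVec xp ∧ x 26 = 1 ∧ x 8 = 1}.ncard = 9 := by
  have hinj : Function.Injective fun p : (Fin 3 → ℤ) × (Fin 3 → ℤ) ↦
      blockArray p.1 p.2 ∘ colEquiv.symm :=
    colEquiv.symm.surjective.injective_comp_right.comp blockArray_injective2.uncurry
  rw [solutionSet_eq_image_blockArray, Set.ncard_image_of_injective _ hinj, Set.ncard_prod,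
    ncard_stdSimplex_int, Fintype.card_fin]
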